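/- Let α be a graph function and v a vertex with ρ_v^R > 0. Then there exist an edge (u,v) of G entering v and an edge (v,w) of G leaving v such that y_v + ρ_v^R/2 ≤ (y_u + y_w)/2. -/

import Mathlib

open Filter Topology

variable {V : Type*}

/-- Maximum weight of an edge leaving `v` (as a supremum over the finite edge set). -/
noncomputable def outMax (E : V → V → Prop) (α : V → V → ℝ) (v : V) : ℝ :=
  sSup {x : ℝ | ∃ w, E v w ∧ x = α v w}

/-- Maximum weight of an edge entering `v`. -/
noncomputable def inMax (E : V → V → Prop) (α : V → V → ℝ) (v : V) : ℝ :=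
  sSup {x : ℝ | ∃ u, E u v ∧ x = α u v}

/-- A graph function is balanced if the max outgoing weight equals the max incoming
weight at every vertex. -/
def IsBalancedGF (E : V → V → Prop) (α : V → V → ℝ) : Prop :=
  ∀ v, outMax E α v = inMax E α v

/-- Raising imbalance at `v`. -/
noncomputable def rhoR (E : V → V → Prop) (α : V → V → ℝ) (v : V) : ℝ :=
  max 0 (outMax E α v - inMax E α v)

/-- Lowering imbalance at `v`. -/
noncomputable def rhoL (E : V → V → Prop) (α : V → V → ℝ) (v : V) : ℝ :=
  max 0 (inMax E α v - outMax E α v)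

/-- A balancing operation at `v`: add `(α_v^out − α_v^in)/2` to every edge entering `v`
and subtract the same quantity from every edge leaving `v` (a self-loop is unchanged). -/
noncomputable def balanceAt [DecidableEq V] (E : V → V → Prop) (α : V → V → ℝ) (v : V) :
    V → V → ℝ :=
  fun a b =>
    α a b + (if b = v then (outMax E α v - inMax E α v) / 2 else 0)
          - (if a = v then (outMax E α v - inMax E α v) / 2 else 0)

/-- A raising operation at `v`: balance at `v` if the raising imbalance is positive,
otherwise do nothing. -/
noncomputable def raiseOp [DecidableEq V] (E : V → V → Prop) (α : V → V → ℝ) (v : V) :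
    V → V → ℝ :=
  if 0 < rhoR E α v then balanceAt E α v else α

/-- A lowering operation at `v`: balance at `v` if the lowering imbalance is positive,
otherwise do nothing. -/
noncomputable def lowerOp [DecidableEq V] (E : V → V → Prop) (α : V → V → ℝ) (v : V) :
    V → V → ℝ :=
  if 0 < rhoL E α v then balanceAt E α v else α

/-- A sequence of vertices is fair if every vertex appears infinitely often. -/
def Fair (σ : ℕ → V) : Prop := ∀ (v : V) (N : ℕ), ∃ t, N ≤ t ∧ σ t = v

/-- State after `t` raising operations along the sequence `σ`. -/
noncomputable def raiseIter [DecidableEq V] (E : V → V → Prop) (α : V → V → ℝ)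
    (σ : ℕ → V) : ℕ → V → V → ℝ
  | 0 => α
  | t + 1 => raiseOp E (raiseIter E α σ t) (σ t)

/-- State after `t` lowering operations along the sequence `σ`. -/
noncomputable def lowerIter [DecidableEq V] (E : V → V → Prop) (α : V → V → ℝ)
    (σ : ℕ → V) : ℕ → V → V → ℝ
  | 0 => α
  | t + 1 => lowerOp E (lowerIter E α σ t) (σ t)

/-- The raising vector: cumulative amount by which each vertex has been raised after
`t` raising operations along `σ`. -/
noncomputable def rvec [DecidableEq V] (E : V → V → Prop) (α : V → V → ℝ)
    (σ : ℕ → V) : ℕ → V → ℝ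
  | 0 => fun _ => 0
  | t + 1 => fun u =>
      rvec E α σ t u + (if u = σ t then rhoR E (raiseIter E α σ t) (σ t) / 2 else 0)

/-- State after performing raising operations along a finite list of vertices. -/
noncomputable def raiseList [DecidableEq V] (E : V → V → Prop) :
    (V → V → ℝ) → List V → V → V → ℝ
  | α, [] => α
  | α, v :: l => raiseList E (raiseOp E α v) l

/-- Raising vector accumulated along a finite list of raising operations. -/
noncomputable def rvecList [DecidableEq V] (E : V → V → Prop) :
    (V → V → ℝ) → List V → V → ℝ
  | _, [] => fun _ => 0
  | α, v :: l => fun u =>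
      (if u = v then rhoR E α v / 2 else 0) + rvecList E (raiseOp E α v) l u

/-- State after performing (unconditional) balancing operations along a list. -/
noncomputable def balList [DecidableEq V] (E : V → V → Prop) :
    (V → V → ℝ) → List V → V → V → ℝ
  | α, [] => α
  | α, v :: l => balList E (balanceAt E α v) l

/-- State after `t` balancing operations along the sequence `σ`. -/
noncomputable def balIter [DecidableEq V] (E : V → V → Prop) (α : V → V → ℝ)
    (σ : ℕ → V) : ℕ → V → V → ℝ
  | 0 => α
  | t + 1 => balanceAt E (balIter E α σ t) (σ t)

/-- Two graph functions are equivalent if their sums around every directed cycle agree. -/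
def Equivalent (E : V → V → Prop) (α γ : V → V → ℝ) : Prop :=
  ∀ (k : ℕ) (f : ZMod (k + 1) → V), (∀ i, E (f i) (f (i + 1))) →
    (∑ i, α (f i) (f (i + 1))) = ∑ i, γ (f i) (f (i + 1))

/-- The raising-balanced graph function determined by the limiting raising vector. -/
noncomputable def alphaR (α : V → V → ℝ) (rstar : V → ℝ) : V → V → ℝ :=
  fun u v => α u v + rstar v - rstar u

/-- Height of a vertex: `y_v = -r*_v`. -/
noncomputable def height (rstar : V → ℝ) (v : V) : ℝ := -rstar v

/-- Level of a vertex: maximum over incoming edges of `α^R`. -/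
noncomputable def level (E : V → V → Prop) (α : V → V → ℝ) (rstar : V → ℝ) (v : V) : ℝ :=
  inMax E (alphaR α rstar) v

/-- Momentum of a vertex: `m_v = max over edges (u,v) entering v of (α_{uv} − x_v)`. -/
noncomputable def momentum (E : V → V → Prop) (α : V → V → ℝ) (rstar : V → ℝ) (v : V) : ℝ :=
  sSup {c : ℝ | ∃ u, E u v ∧ c = α u v - level E α rstar v}

lemma raiseIter_eq_rvec [DecidableEq V] (E : V → V → Prop) (α : V → V → ℝ) (σ : ℕ → V)
    (t : ℕ) (a b : V) :
    raiseIter E α σ t a b = α a b + rvec E α σ t b - rvec E α σ t a := by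
  induction t with
  | zero => simp [raiseIter, rvec]
  | succ t ih =>
    simp only [raiseIter, rvec, raiseOp]
    split_ifs with h h1 h2 h2 h1 h2 h2 <;>
      simp only [balanceAt, ih, rhoR, lt_max_iff, lt_irrefl, false_or, not_lt] at * <;>
      first
      | (rw [max_eq_right h.le]; simp [*]; try ring)
      | (rw [max_eq_left h]; simp [*])
      | simp [*]

lemma exists_fair [Fintype V] [Nonempty V] : ∃ σ : ℕ → V, Fair σ := by
  classical
  have hc : 0 < Fintype.card V := Fintype.card_pos
  refine ⟨fun t => (Fintype.equivFin V).symm ⟨t % Fintype.card V, Nat.mod_lt _ hc⟩, ?_⟩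
  intro v N
  refine ⟨N * Fintype.card V + (Fintype.equivFin V v : ℕ), ?_, ?_⟩
  · nlinarith [Nat.zero_le (Fintype.equivFin V v : ℕ)]
  · rw [Equiv.symm_apply_eq]
    ext
    simp [Nat.add_mod, Nat.mod_eq_of_lt]

lemma le_outMax' [Finite V] (E : V → V → Prop) (α : V → V → ℝ) {v w : V} (h : E v w) :
    α v w ≤ outMax E α v := by
  refine le_csSup ?_ ⟨w, h, rfl⟩
  refine ((Set.finite_range (fun w => α v w)).subset ?_).bddAbove
  rintro x ⟨w, -, rfl⟩
  exact ⟨w, rfl⟩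

lemma le_inMax' [Finite V] (E : V → V → Prop) (α : V → V → ℝ) {u v : V} (h : E u v) :
    α u v ≤ inMax E α v := by
  refine le_csSup ?_ ⟨u, h, rfl⟩
  refine ((Set.finite_range (fun u => α u v)).subset ?_).bddAbove
  rintro x ⟨w, -, rfl⟩
  exact ⟨w, rfl⟩

lemma exists_outMax [Finite V] (E : V → V → Prop) (α : V → V → ℝ) {v : V} (h : ∃ w, E v w) :
    ∃ w, E v w ∧ outMax E α v = α v w := by
  obtain ⟨w, hw⟩ := h
  refine Set.Nonempty.csSup_mem (s := {x : ℝ | ∃ w, E v w ∧ x = α v w}) ⟨_, w, hw, rfl⟩ ?_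
  refine (Set.finite_range (fun w => α v w)).subset ?_
  rintro x ⟨w, -, rfl⟩
  exact ⟨w, rfl⟩

lemma exists_inMax [Finite V] (E : V → V → Prop) (α : V → V → ℝ) {v : V} (h : ∃ u, E u v) :
    ∃ u, E u v ∧ inMax E α v = α u v := by
  obtain ⟨w, hw⟩ := h
  refine Set.Nonempty.csSup_mem (s := {x : ℝ | ∃ u, E u v ∧ x = α u v}) ⟨_, w, hw, rfl⟩ ?_
  refine (Set.finite_range (fun u => α u v)).subset ?_
  rintro x ⟨w, -, rfl⟩
  exact ⟨w, rfl⟩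

lemma limit_balanced [Fintype V] [Nonempty V] [DecidableEq V] (E : V → V → Prop)
    (hout : ∀ v, ∃ w, E v w) (hin : ∀ v, ∃ u, E u v)
    (α : V → V → ℝ) (rstar : V → ℝ)
    (hrstar : ∀ σ : ℕ → V, Fair σ → ∀ v,
      Tendsto (fun t => rvec E α σ t v) atTop (nhds (rstar v))) (v : V) :
    outMax E (alphaR α rstar) v ≤ inMax E (alphaR α rstar) v := by
  obtain ⟨σ, hσ⟩ := exists_fair (V := V)
  have hr := hrstar σ hσ
  by_contra! hlt
  obtain ⟨ε, hε⟩ : ∃ ε, ε = (outMax E (alphaR α rstar) v - inMax E (alphaR α rstar) v) / 8 :=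
    ⟨_, rfl⟩
  have hε0 : 0 < ε := by linarith
  have hev : ∀ᶠ t in atTop, ∀ x, |rvec E α σ t x - rstar x| < ε := by
    rw [Filter.eventually_all]
    intro x
    have := (Metric.tendsto_nhds.1 (hr x)) ε hε0
    simpa [Real.dist_eq] using this
  obtain ⟨N, hN⟩ := eventually_atTop.1 hev
  obtain ⟨t, ht, htv⟩ := hσ v N
  have h1 := hN t ht
  have h2 := hN (t + 1) (by omega) v
  have h3 : rvec E α σ (t + 1) v = rvec E α σ t v + rhoR E (raiseIter E α σ t) v / 2 := by
    simp [rvec, htv]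
  obtain ⟨w, hw, hwo⟩ := exists_outMax E (alphaR α rstar) (hout v)
  obtain ⟨u, hu, hui⟩ := exists_inMax E (raiseIter E α σ t) (hin v)
  have h4 := le_outMax' E (raiseIter E α σ t) hw
  have h5 := le_inMax' E (alphaR α rstar) hu
  have h6 : outMax E (raiseIter E α σ t) v - inMax E (raiseIter E α σ t) v
      ≤ rhoR E (raiseIter E α σ t) v := le_max_right _ _
  rw [raiseIter_eq_rvec] at h4 hui
  simp only [alphaR] at hwo h5 
  have a1 := abs_lt.1 (h1 v)
  have a2 := abs_lt.1 (h1 u)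
  have a3 := abs_lt.1 (h1 w)
  have a4 := abs_lt.1 h2
  linarith [a1.1, a1.2, a2.1, a2.2, a3.1, a3.2, a4.1, a4.2]

/-- If `ρ_v^R > 0` then there are edges `(u,v)` and `(v,w)` with
`y_v + ρ_v^R/2 ≤ (y_u + y_w)/2`. -/
theorem height_local_smoothing
    [Fintype V] [Nonempty V] [DecidableEq V] (E : V → V → Prop)
    (hout : ∀ v, ∃ w, E v w) (hin : ∀ v, ∃ u, E u v)
    (hconn : ∀ u v : V, Relation.ReflTransGen E u v)
    (α : V → V → ℝ) (rstar : V → ℝ)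
    (hrstar : ∀ σ : ℕ → V, Fair σ → ∀ v,
      Tendsto (fun t => rvec E α σ t v) atTop (nhds (rstar v)))
    (v : V) (hv : 0 < rhoR E α v) :
    ∃ u w, E u v ∧ E v w ∧
      height rstar v + rhoR E α v / 2 ≤
        (height rstar u + height rstar w) / 2 := by
  obtain ⟨w, hw, hwo⟩ := exists_outMax E α (hout v)
  obtain ⟨u, hu, hui⟩ := exists_inMax E (alphaR α rstar) (hin v)
  refine ⟨u, w, hu, hw, ?_⟩
  have h1 := limit_balanced E hout hin α rstar hrstar v
  have h2 := le_outMax' E (alphaR α rstar) hw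
  have h3 := le_inMax' E α hu
  have h4 : rhoR E α v = outMax E α v - inMax E α v := by
    unfold rhoR at hv ⊢
    rcases le_total (outMax E α v - inMax E α v) 0 with h | h
    · rw [max_eq_left h] at hv
      exact absurd hv (lt_irrefl _)
    · exact max_eq_right h
  rw [h4]
  rw [hui] at h1
  generalize outMax E (alphaR α rstar) v = o at *
  simp only [alphaR, height] at *
  linarith
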